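/- arXiv:math/0402257 — 2 statements merged into one kernel-verified Lean document; each statement's English description precedes it below -/
import Mathlib

section
/- Let n ≥ 2 and let Γ be a discrete subgroup of SO₀(1,n−1) containing no loxodromic element (no element of spectral radius greater than 1). Then there is a finite-index subgroup Γ′ of Γ such that either (a) there is a nonzero lightlike vector v with γ·v ∈ ℝ·v for every γ ∈ Γ′ (Γ′ stabilizes an isotropic direction), or (b) there is a timelike vector u with γ·u = u for every γ ∈ Γ′ (so Γ′ is contained in a conjugate of the compact group SO(n−1)). -/
/-!
The dichotomy is between `Γ` bounded and `Γ` unbounded as a set of matrices.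

If `Γ` is bounded, then, being discrete, it is finite (`finite_of_bounded`): an injective sequence
in `Γ` has a convergent subsequence `γ_k`, and `γ_k γ_{k+1}⁻¹ → 1` forces `γ_k = γ_{k+1}`
eventually. The trivial subgroup then has finite index and fixes every timelike vector.

If `Γ` is unbounded, choose `γ_k ∈ Γ` with `‖γ_k‖ → ∞` such that `γ_k / ‖γ_k‖` converges to some
`T ≠ 0`. Passing to the limit in `γᵀ J γ = J` and in `γ J γᵀ = J`, where `J` is the Gram matrix of
the Minkowski form, gives `Tᵀ J T = 0` and `T J Tᵀ = 0`. Totally isotropic subspaces have dimension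
at most one, so `T x = ⟨w|x⟩ v` with `v` and `w` lightlike. As no element of `Γ` is loxodromic, all
eigenvalues have modulus at most `1`, so traces on `Γ` are bounded by `n` (`abs_trace_le`); hence
`⟨w|g v⟩ = tr (T g) = lim tr (γ_k g) / ‖γ_k‖ = 0` for every `g ∈ Γ`. Orthogonal lightlike vectors
are proportional, so every `g v`, in particular `v` itself, lies on the line `ℝ w`. Thus `Γ` itself
stabilizes the isotropic direction `ℝ v`.
-/


open Set Matrix

noncomputable section

/-- The Minkowski bilinear form `⟨x|y⟩ = -x₀y₀ + x₁y₁ + … + x_{n-1}y_{n-1}` on `ℝⁿ`. -/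
def mink {n : ℕ} (x y : Fin n → ℝ) : ℝ :=
  ∑ i : Fin n, (if (i : ℕ) = 0 then (-1 : ℝ) else 1) * x i * y i

/-- Membership in `SO₀(1,n-1)`: preserves the Minkowski form, determinant 1,
positive (0,0) entry. -/
def IsSOo {n : ℕ} (γ : GL (Fin n) ℝ) : Prop :=
  (∀ x y : Fin n → ℝ, mink ((γ : Matrix (Fin n) (Fin n) ℝ).mulVec x)
      ((γ : Matrix (Fin n) (Fin n) ℝ).mulVec y) = mink x y) ∧
  (γ : Matrix (Fin n) (Fin n) ℝ).det = 1 ∧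
  ∀ i : Fin n, (i : ℕ) = 0 → 0 < (γ : Matrix (Fin n) (Fin n) ℝ) i i

/-- Loxodromic: spectral radius (of the complexified matrix) exceeds 1. -/
def IsLoxodromic {n : ℕ} (γ : GL (Fin n) ℝ) : Prop :=
  1 < spectralRadius ℂ ((γ : Matrix (Fin n) (Fin n) ℝ).map (algebraMap ℝ ℂ))

section Helpers

attribute [local instance] Matrix.normedAddCommGroup Matrix.normedSpace

open Filter Topology

/-- The Gram matrix `diag(-1, 1, …, 1)` of the Minkowski form. -/
def gramJ (n : ℕ) : Matrix (Fin n) (Fin n) ℝ :=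
  Matrix.diagonal fun i => if (i : ℕ) = 0 then (-1 : ℝ) else 1

lemma mink_eq {n : ℕ} (x y : Fin n → ℝ) : mink x y = x ⬝ᵥ (gramJ n *ᵥ y) := by
  simp only [mink, gramJ, dotProduct, mulVec_diagonal]
  exact Finset.sum_congr rfl fun i _ => by ring

lemma gramJ_mul_self (n : ℕ) : gramJ n * gramJ n = 1 := by
  rw [gramJ, diagonal_mul_diagonal, ← diagonal_one]
  congr 1; ext i; split_ifs <;> norm_num

lemma gramJ_mulVec_mulVec {n : ℕ} (x : Fin n → ℝ) : gramJ n *ᵥ (gramJ n *ᵥ x) = x := by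
  rw [mulVec_mulVec, gramJ_mul_self, one_mulVec]

lemma mink_comm {n : ℕ} (x y : Fin n → ℝ) : mink x y = mink y x := by
  simp only [mink]
  exact Finset.sum_congr rfl fun i _ => by ring

lemma mink_mulVec {n : ℕ} (A : Matrix (Fin n) (Fin n) ℝ) (x y : Fin n → ℝ) :
    mink (A *ᵥ x) (A *ᵥ y) = x ⬝ᵥ ((Aᵀ * gramJ n * A) *ᵥ y) := by
  rw [mink_eq, ← mulVec_mulVec, ← mulVec_mulVec, dotProduct_mulVec x Aᵀ, vecMul_transpose]

/-- The form is positive definite on the hyperplane `x₀ = 0`. -/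
lemma eq_zero_of_mink {n : ℕ} (i₀ : Fin n) (hi : (i₀ : ℕ) = 0) (z : Fin n → ℝ)
    (hz : mink z z = 0) (h0 : z i₀ = 0) : z = 0 := by
  have hterm : ∀ i : Fin n, (if (i : ℕ) = 0 then (-1 : ℝ) else 1) * z i * z i = z i * z i := by
    intro i
    split_ifs with h
    · have : i = i₀ := Fin.ext (by omega)
      simp [this, h0]
    · ring
  rw [mink, Finset.sum_congr rfl fun i _ => hterm i,
    Finset.sum_eq_zero_iff_of_nonneg fun i _ => mul_self_nonneg _] at hz
  ext i
  simpa using hz i (Finset.mem_univ i)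

/-- Orthogonal lightlike vectors are proportional. -/
lemma exists_smul_of_mink {n : ℕ} (i₀ : Fin n) (hi : (i₀ : ℕ) = 0) (v u : Fin n → ℝ)
    (hv : v ≠ 0) (hvv : mink v v = 0) (huu : mink u u = 0) (hvu : mink v u = 0) :
    ∃ c : ℝ, u = c • v := by
  have hv0 : v i₀ ≠ 0 := fun h => hv (eq_zero_of_mink i₀ hi v hvv h)
  refine ⟨u i₀ / v i₀, sub_eq_zero.mp (eq_zero_of_mink i₀ hi _ ?_ ?_)⟩
  · have huv : mink u v = 0 := by rw [mink_comm, hvu]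
    simp only [mink_eq] at *
    simp [mulVec_sub, mulVec_smul, hvv, huu, hvu, huv]
  · simp [hv0]

lemma transpose_mul_gramJ {n : ℕ} {γ : GL (Fin n) ℝ} (h : IsSOo γ) :
    (γ.val)ᵀ * gramJ n * γ.val = gramJ n := by
  apply Matrix.ext_of_mulVec_single
  intro j
  ext i
  have := h.1 (Pi.single i 1) (Pi.single j 1)
  rw [mink_mulVec, mink_eq] at this
  simpa using this

/-- The inverse of a Lorentz matrix `γ` is `J γᵀ J`. -/
lemma mul_gramJ_transpose {n : ℕ} {γ : GL (Fin n) ℝ} (h : IsSOo γ) :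
    γ.val * (gramJ n * (γ.val)ᵀ * gramJ n) = 1 := by
  rw [mul_eq_one_comm]
  calc gramJ n * (γ.val)ᵀ * gramJ n * γ.val
      = gramJ n * ((γ.val)ᵀ * gramJ n * γ.val) := by simp only [Matrix.mul_assoc]
    _ = 1 := by rw [transpose_mul_gramJ h, gramJ_mul_self]

lemma mul_gramJ_transpose' {n : ℕ} {γ : GL (Fin n) ℝ} (h : IsSOo γ) :
    γ.val * gramJ n * (γ.val)ᵀ = gramJ n := by
  calc γ.val * gramJ n * (γ.val)ᵀ
      = γ.val * (gramJ n * (γ.val)ᵀ * gramJ n) * gramJ n := by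
        simp only [Matrix.mul_assoc, gramJ_mul_self, Matrix.mul_one]
    _ = gramJ n := by rw [mul_gramJ_transpose h, Matrix.one_mul]

/-- The trace is the sum of the `n` complex eigenvalues, each of modulus at most `1`. -/
lemma abs_trace_le {n : ℕ} {γ : GL (Fin n) ℝ} (h : ¬ IsLoxodromic γ) :
    |γ.val.trace| ≤ n := by
  set A := (γ : Matrix (Fin n) (Fin n) ℝ).map (algebraMap ℝ ℂ) with hA
  have htr : (γ.val.trace : ℂ) = A.charpoly.roots.sum := by
    rw [← Matrix.trace_eq_sum_roots_charpoly, hA]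
    simp [Matrix.trace]
  have hroot : ∀ z ∈ A.charpoly.roots, ‖z‖ ≤ 1 := by
    intro z hz
    have hz' : z ∈ spectrum ℂ A := by
      rw [Matrix.mem_spectrum_iff_isRoot_charpoly]
      exact (Polynomial.mem_roots'.mp hz).2
    have h1 : (‖z‖₊ : ENNReal) ≤ spectralRadius ℂ A :=
      le_iSup₂ (f := fun k (_ : k ∈ spectrum ℂ A) => (‖k‖₊ : ENNReal)) z hz'
    have h2 := h1.trans (not_lt.mp h)
    exact_mod_cast h2
  have hcard : Multiset.card A.charpoly.roots ≤ n := by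
    simpa using A.charpoly.card_roots'
  calc |γ.val.trace| = ‖A.charpoly.roots.sum‖ := by
        rw [← htr, Complex.norm_real, Real.norm_eq_abs]
    _ ≤ (A.charpoly.roots.map fun z => ‖z‖).sum := norm_multiset_sum_le _
    _ ≤ Multiset.card (A.charpoly.roots.map fun z => ‖z‖) • (1 : ℝ) := by
        apply Multiset.sum_le_card_nsmul
        intro x hx
        obtain ⟨z, hz, rfl⟩ := Multiset.mem_map.mp hx
        exact hroot z hz
    _ ≤ n := by
        simpa using (Nat.cast_le (α := ℝ)).mpr hcard

lemma finite_of_bounded {n : ℕ} (Γ : Subgroup (GL (Fin n) ℝ))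
    (hSO : ∀ γ ∈ Γ, IsSOo γ)
    (hdisc : DiscreteTopology
      ↥(Units.val '' (Γ : Set (GL (Fin n) ℝ)) : Set (Matrix (Fin n) (Fin n) ℝ)))
    (hb : Bornology.IsBounded
      (Units.val '' (Γ : Set (GL (Fin n) ℝ)) : Set (Matrix (Fin n) (Fin n) ℝ))) :
    Finite Γ := by
  by_contra hinf
  rw [not_finite_iff_infinite] at hinf
  let f : ℕ → Γ := Infinite.natEmbedding Γ
  have hf : Function.Injective f := (Infinite.natEmbedding Γ).injective
  obtain ⟨a, -, φ, hφ, hlim⟩ := tendsto_subseq_of_bounded hb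
    (x := fun k => (f k).1.val) (fun k => ⟨_, (f k).2, rfl⟩)
  have hlim' : Tendsto (fun k => (f (φ (k + 1))).1.val) atTop (𝓝 a) :=
    hlim.comp (tendsto_add_atTop_nat 1)
  -- the continuous expression `x J yᵀ J` stands for `x y⁻¹` on `Γ`
  have hc : Continuous fun p : Matrix (Fin n) (Fin n) ℝ × Matrix (Fin n) (Fin n) ℝ =>
      p.1 * (gramJ n * p.2ᵀ * gramJ n) := by fun_prop
  have h1 := (hc.tendsto (a, a)).comp (hlim.prodMk_nhds hlim)
  have ha : a * (gramJ n * aᵀ * gramJ n) = 1 := by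
    refine tendsto_nhds_unique h1 ?_
    refine tendsto_const_nhds.congr fun k => ?_
    exact (mul_gramJ_transpose (hSO _ (f (φ k)).2)).symm
  have h2 := (hc.tendsto (a, a)).comp (hlim.prodMk_nhds hlim')
  simp only [ha] at h2
  have hval : ∀ k, (f (φ k)).1.val * (gramJ n * ((f (φ (k + 1))).1.val)ᵀ * gramJ n)
      = (f (φ k) * (f (φ (k + 1)))⁻¹).1.val := by
    intro k
    have h := mul_gramJ_transpose (hSO _ (f (φ (k + 1))).2)
    have h' := Units.inv_eq_of_mul_eq_one_right h
    simp [← h']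
  have h3 : Tendsto (fun k => (f (φ k) * (f (φ (k + 1)))⁻¹).1.val) atTop (𝓝 1) :=
    h2.congr fun k => hval k
  obtain ⟨U, hU, hU1⟩ := (discreteTopology_subtype_iff'.mp hdisc) 1 ⟨1, Γ.one_mem, rfl⟩
  have hmem : (1 : Matrix (Fin n) (Fin n) ℝ) ∈ U :=
    (hU1.symm ▸ Set.mem_singleton _ : (1 : Matrix (Fin n) (Fin n) ℝ) ∈ U ∩ _).1
  obtain ⟨k, hk⟩ := (h3.eventually (hU.mem_nhds hmem)).exists
  have hk1 : (f (φ k) * (f (φ (k + 1)))⁻¹).1.val ∈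
      U ∩ Units.val '' (Γ : Set (GL (Fin n) ℝ)) := ⟨hk, _, Subtype.property _, rfl⟩
  rw [hU1, Set.mem_singleton_iff] at hk1
  have hk2 : f (φ k) * (f (φ (k + 1)))⁻¹ = 1 := Subtype.ext (Units.ext hk1)
  exact absurd (hφ.injective (hf (mul_inv_eq_one.mp hk2))) (by omega)

/-- A limit of normalized matrices of an unbounded `Γ`, with the equations it inherits. -/
lemma exists_limit {n : ℕ} (Γ : Subgroup (GL (Fin n) ℝ))
    (hSO : ∀ γ ∈ Γ, IsSOo γ) (hnolox : ∀ γ ∈ Γ, ¬ IsLoxodromic γ)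
    (hb : ¬ Bornology.IsBounded
      (Units.val '' (Γ : Set (GL (Fin n) ℝ)) : Set (Matrix (Fin n) (Fin n) ℝ))) :
    ∃ T : Matrix (Fin n) (Fin n) ℝ, T ≠ 0 ∧ Tᵀ * gramJ n * T = 0 ∧ T * gramJ n * Tᵀ = 0 ∧
      ∀ g ∈ Γ, (T * g.val).trace = 0 := by
  have hex : ∀ k : ℕ, ∃ γ ∈ Γ, (k : ℝ) < ‖γ.val‖ := by
    intro k
    by_contra! hcon
    refine hb (isBounded_iff_forall_norm_le.mpr ⟨k, ?_⟩)
    rintro _ ⟨γ, hγ, rfl⟩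
    exact hcon γ hγ
  choose γ hγ hk using hex
  have hpos : ∀ k, 0 < ‖(γ k).val‖ := fun k => (Nat.cast_nonneg k).trans_lt (hk k)
  have hinv : Tendsto (fun k => ‖(γ k).val‖⁻¹) atTop (𝓝 0) :=
    tendsto_inv_atTop_zero.comp
      (tendsto_atTop_mono (fun k => (hk k).le) tendsto_natCast_atTop_atTop)
  obtain ⟨T, hT, φ, hφ, hlim⟩ := (isCompact_sphere (0 : Matrix (Fin n) (Fin n) ℝ) 1).tendsto_subseq
    (x := fun k => ‖(γ k).val‖⁻¹ • (γ k).val) (fun k => by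
      rw [mem_sphere_zero_iff_norm, norm_smul, norm_inv, norm_norm, inv_mul_cancel₀ (hpos k).ne'])
  have hinvφ := hinv.comp hφ.tendsto_atTop
  have hzero : Tendsto (fun k => (‖(γ (φ k)).val‖⁻¹ * ‖(γ (φ k)).val‖⁻¹) • gramJ n)
      atTop (𝓝 0) := by
    simpa using (hinvφ.mul hinvφ).smul_const (gramJ n)
  refine ⟨T, ?_, ?_, ?_, ?_⟩
  · rintro rfl
    simp at hT
  · have hc : Continuous fun A : Matrix (Fin n) (Fin n) ℝ => Aᵀ * gramJ n * A := by fun_prop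
    refine tendsto_nhds_unique ((hc.tendsto T).comp hlim) (hzero.congr fun k => ?_)
    simp [transpose_mul_gramJ (hSO _ (hγ (φ k))), smul_smul]
  · have hc : Continuous fun A : Matrix (Fin n) (Fin n) ℝ => A * gramJ n * Aᵀ := by fun_prop
    refine tendsto_nhds_unique ((hc.tendsto T).comp hlim) (hzero.congr fun k => ?_)
    simp [mul_gramJ_transpose' (hSO _ (hγ (φ k))), smul_smul]
  · intro g hg
    have hc : Continuous fun A : Matrix (Fin n) (Fin n) ℝ => (A * g.val).trace := by fun_prop
    refine tendsto_nhds_unique ((hc.tendsto T).comp hlim) ?_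
    refine squeeze_zero_norm (a := fun k => ‖(γ (φ k)).val‖⁻¹ * n) (fun k => ?_)
      (by simpa using hinvφ.mul_const (n : ℝ))
    have htr := abs_trace_le (hnolox _ (Γ.mul_mem (hγ (φ k)) hg))
    simp only [Function.comp, Matrix.smul_mul, Matrix.trace_smul, smul_eq_mul, norm_mul, norm_inv,
      norm_norm]
    exact mul_le_mul_of_nonneg_left htr (inv_nonneg.mpr (norm_nonneg _))

lemma exists_isotropic {n : ℕ} (hn : 2 ≤ n) (Γ : Subgroup (GL (Fin n) ℝ))
    (hSO : ∀ γ ∈ Γ, IsSOo γ) (hnolox : ∀ γ ∈ Γ, ¬ IsLoxodromic γ)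
    (hb : ¬ Bornology.IsBounded
      (Units.val '' (Γ : Set (GL (Fin n) ℝ)) : Set (Matrix (Fin n) (Fin n) ℝ))) :
    ∃ v : Fin n → ℝ, v ≠ 0 ∧ mink v v = 0 ∧
      ∀ γ ∈ Γ, ∃ c : ℝ, (γ : Matrix (Fin n) (Fin n) ℝ).mulVec v = c • v := by
  obtain ⟨T, hT0, hT1, hT2, htr⟩ := exists_limit Γ hSO hnolox hb
  let i₀ : Fin n := ⟨0, by omega⟩
  have hi : (i₀ : ℕ) = 0 := rfl
  have hiso : ∀ x y, mink (T *ᵥ x) (T *ᵥ y) = 0 := fun x y => by simp [mink_mulVec, hT1]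
  obtain ⟨x, hx⟩ : ∃ x, T *ᵥ x ≠ 0 := by
    by_contra! hcon
    exact hT0 (Matrix.ext_of_mulVec_single fun j => by rw [hcon, zero_mulVec])
  obtain ⟨v, hv⟩ : ∃ v, v = T *ᵥ x := ⟨_, rfl⟩
  rw [← hv] at hx
  have hvv : mink v v = 0 := by rw [hv, hiso]
  have hcol : ∀ j, ∃ c : ℝ, T *ᵥ Pi.single j 1 = c • v := fun j =>
    exists_smul_of_mink i₀ hi v _ hx hvv (hiso _ _) (by rw [hv, hiso])
  choose w hw using hcol
  have hTvw : T = vecMulVec v w := by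
    ext i j
    have := congrFun (hw j) i
    simpa [vecMulVec_apply, mul_comm] using this
  -- `u` represents the functional `w` through the form: `⟨u|y⟩ = w ⬝ᵥ y`
  obtain ⟨u, hu⟩ : ∃ u, u = gramJ n *ᵥ w := ⟨_, rfl⟩
  have hwu : w = gramJ n *ᵥ u := by rw [hu, gramJ_mulVec_mulVec]
  have huy : ∀ y, mink u y = w ⬝ᵥ y := fun y => by
    rw [mink_comm, mink_eq, ← hwu, dotProduct_comm]
  have hu0 : u ≠ 0 := by
    rintro rfl
    apply hT0
    rw [hTvw, hwu]
    simp
  have huu : mink u u = 0 := by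
    rw [huy, hu]
    have h := hT2
    rw [hTvw, transpose_vecMulVec, Matrix.vecMulVec_mul, vecMulVec_mul_vecMulVec] at h
    rw [dotProduct_mulVec]
    obtain ⟨i, hvi⟩ := Function.ne_iff.mp hx
    have h' := congrFun (congrFun h i) i
    simpa [vecMulVec_apply, show v i ≠ 0 from hvi] using h'
  have hug : ∀ g ∈ Γ, mink u (g.val *ᵥ v) = 0 := by
    intro g hg
    have h := htr g hg
    rw [hTvw, vecMulVec_mul, trace_vecMulVec, dotProduct_comm, ← dotProduct_mulVec] at h
    rw [huy, h]
  have hline : ∀ g ∈ Γ, ∃ c : ℝ, g.val *ᵥ v = c • u := fun g hg =>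
    exists_smul_of_mink i₀ hi u _ hu0 huu (by rw [(hSO g hg).1, hvv]) (hug g hg)
  obtain ⟨c, hc⟩ := hline 1 Γ.one_mem
  rw [Units.val_one, one_mulVec] at hc
  have hc0 : c ≠ 0 := by
    rintro rfl
    exact hx (by simpa using hc)
  refine ⟨v, hx, hvv, fun g hg => ?_⟩
  obtain ⟨d, hd⟩ := hline g hg
  refine ⟨d / c, ?_⟩
  calc g.val *ᵥ v = d • u := hd
    _ = (d / c) • (c • u) := by rw [smul_smul, div_mul_cancel₀ _ hc0]
    _ = (d / c) • v := by rw [← hc]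

/-- The dichotomy, stated while a norm on matrices is an instance. The topology in `hdisc` is the
product topology, with or without that instance. -/
lemma exists_finiteIndex {n : ℕ} (hn : 2 ≤ n) (Γ : Subgroup (GL (Fin n) ℝ))
    (hSO : ∀ γ ∈ Γ, IsSOo γ)
    (hdisc : DiscreteTopology
      ↥(Units.val '' (Γ : Set (GL (Fin n) ℝ)) : Set (Matrix (Fin n) (Fin n) ℝ)))
    (hnolox : ∀ γ ∈ Γ, ¬ IsLoxodromic γ) :
    ∃ Γ' : Subgroup (GL (Fin n) ℝ), Γ' ≤ Γ ∧ (Γ'.subgroupOf Γ).index ≠ 0 ∧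
      ((∃ v : Fin n → ℝ, v ≠ 0 ∧ mink v v = 0 ∧
          ∀ γ ∈ Γ', ∃ c : ℝ, (γ : Matrix (Fin n) (Fin n) ℝ).mulVec v = c • v) ∨
        (∃ u : Fin n → ℝ, mink u u < 0 ∧
          ∀ γ ∈ Γ', (γ : Matrix (Fin n) (Fin n) ℝ).mulVec u = u)) := by
  by_cases hb : Bornology.IsBounded
      (Units.val '' (Γ : Set (GL (Fin n) ℝ)) : Set (Matrix (Fin n) (Fin n) ℝ))
  · have hfin := finite_of_bounded Γ hSO hdisc hb
    refine ⟨⊥, bot_le, ?_, Or.inr ⟨Pi.single ⟨0, by omega⟩ 1, ?_, ?_⟩⟩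
    · exact Subgroup.index_ne_zero_of_finite
    · simp [mink_eq, gramJ]
    · intro γ hγ
      rw [Subgroup.mem_bot.mp hγ, Units.val_one, one_mulVec]
  · refine ⟨Γ, le_rfl, ?_, Or.inl (exists_isotropic hn Γ hSO hnolox hb)⟩
    simp

end Helpers

/-- a discrete subgroup of `SO₀(1,n−1)` without loxodromic elements has a
finite-index subgroup which either stabilizes an isotropic direction, or fixes a
timelike vector. -/
theorem stmt13 {n : ℕ} (hn : 2 ≤ n) (Γ : Subgroup (GL (Fin n) ℝ))
    (hSO : ∀ γ ∈ Γ, IsSOo γ)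
    (hdisc : DiscreteTopology
      ↥(Units.val '' (Γ : Set (GL (Fin n) ℝ)) : Set (Matrix (Fin n) (Fin n) ℝ)))
    (hnolox : ∀ γ ∈ Γ, ¬ IsLoxodromic γ) :
    ∃ Γ' : Subgroup (GL (Fin n) ℝ), Γ' ≤ Γ ∧ (Γ'.subgroupOf Γ).index ≠ 0 ∧
      ((∃ v : Fin n → ℝ, v ≠ 0 ∧ mink v v = 0 ∧
          ∀ γ ∈ Γ', ∃ c : ℝ, (γ : Matrix (Fin n) (Fin n) ℝ).mulVec v = c • v) ∨
        (∃ u : Fin n → ℝ, mink u u < 0 ∧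
          ∀ γ ∈ Γ', (γ : Matrix (Fin n) (Fin n) ℝ).mulVec u = u)) := by
  exact exists_finiteIndex hn Γ hSO hdisc hnolox
end
end

section
/- Let n ≥ 2 and let Γ be a subgroup of SO₀(1,n−1). The set of future admissible cocycles τ : Γ → ℝⁿ is a convex cone: if τ₁ and τ₂ are future admissible cocycles, then for every c > 0 the cocycle c·τ₁ is future admissible, and for every α ∈ [0,1] the cocycle α·τ₁ + (1−α)·τ₂ is future admissible. -/
/-!
For each repulsive direction `v` of a loxodromic `γ`, both `⟨x|v⟩` and `s_τ(γ)` are linear,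
in `x` and in `τ` respectively. The pairs in `Λ_τ` are indexed by the same `γ` and `v` for
every `τ`, so the same positive or convex combination of points of `Ω⁺(Λ_τ)` witnesses that
the combined cocycle is future admissible.
-/

open Set Matrix

noncomputable section

/-- `𝒮⁺`: future-oriented lightlike vectors of Euclidean norm 1. -/
def Splus (n : ℕ) : Set (Fin n → ℝ) :=
  {v | mink v v = 0 ∧ ∑ i : Fin n, v i ^ 2 = 1 ∧ ∀ i : Fin n, (i : ℕ) = 0 → 0 < v i}

/-- `Ω⁺(Λ) = {x : ⟨x|v⟩ < s for all (v,s) ∈ Λ}`. -/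
def OmegaPlus {n : ℕ} (Λ : Set ((Fin n → ℝ) × ℝ)) : Set (Fin n → ℝ) :=
  {x | ∀ p ∈ Λ, mink x p.1 < p.2}

/-- A cocycle `τ : Γ → ℝⁿ`: `τ(γγ′) = τ(γ) + γ·τ(γ′)`. -/
def IsCocycle {n : ℕ} (Γ : Subgroup (GL (Fin n) ℝ)) (τ : GL (Fin n) ℝ → (Fin n → ℝ)) :
    Prop :=
  ∀ γ ∈ Γ, ∀ γ' ∈ Γ, τ (γ * γ') = τ γ + (γ : Matrix (Fin n) (Fin n) ℝ).mulVec (τ γ')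

/-- `Λ_τ = {(v(γ), s_τ(γ)) : γ ∈ Γ loxodromic}` where `v(γ) ∈ 𝒮⁺` is the (unique)
repulsive eigendirection of `γ`, with eigenvalue `λ(γ) ∈ (0,1)`, and
`s_τ(γ) = ⟨τ(γ)|v(γ)⟩/(1 − λ(γ)⁻¹)`. -/
def LambdaSet {n : ℕ} (Γ : Subgroup (GL (Fin n) ℝ)) (τ : GL (Fin n) ℝ → (Fin n → ℝ)) :
    Set ((Fin n → ℝ) × ℝ) :=
  {p | ∃ γ ∈ Γ, ∃ lam : ℝ, 0 < lam ∧ lam < 1 ∧ p.1 ∈ Splus n ∧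
    (γ : Matrix (Fin n) (Fin n) ℝ).mulVec p.1 = lam • p.1 ∧
    p.2 = mink (τ γ) p.1 / (1 - lam⁻¹)}

/-- `τ` is future admissible when `Ω⁺(Λ_τ) ≠ ∅`. -/
def FutureAdmissible {n : ℕ} (Γ : Subgroup (GL (Fin n) ℝ))
    (τ : GL (Fin n) ℝ → (Fin n → ℝ)) : Prop :=
  (OmegaPlus (LambdaSet Γ τ)).Nonempty

theorem mink_add_left {n : ℕ} (x y z : Fin n → ℝ) :
    mink (x + y) z = mink x z + mink y z := by
  simp only [mink, ← Finset.sum_add_distrib, Pi.add_apply]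
  exact Finset.sum_congr rfl fun i _ => by ring

theorem mink_smul_left {n : ℕ} (c : ℝ) (x z : Fin n → ℝ) :
    mink (c • x) z = c * mink x z := by
  simp only [mink, Finset.mul_sum, Pi.smul_apply, smul_eq_mul]
  exact Finset.sum_congr rfl fun i _ => by ring

/-- the set of future admissible cocycles is a convex cone. -/
theorem stmt14 {n : ℕ} (hn : 2 ≤ n) (Γ : Subgroup (GL (Fin n) ℝ))
    (hSO : ∀ γ ∈ Γ, IsSOo γ)
    (τ₁ τ₂ : GL (Fin n) ℝ → (Fin n → ℝ))
    (hc1 : IsCocycle Γ τ₁) (hc2 : IsCocycle Γ τ₂)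
    (ha1 : FutureAdmissible Γ τ₁) (ha2 : FutureAdmissible Γ τ₂) :
    (∀ c : ℝ, 0 < c →
      IsCocycle Γ (fun γ => c • τ₁ γ) ∧ FutureAdmissible Γ (fun γ => c • τ₁ γ)) ∧
    (∀ α : ℝ, 0 ≤ α → α ≤ 1 →
      IsCocycle Γ (fun γ => α • τ₁ γ + (1 - α) • τ₂ γ) ∧
      FutureAdmissible Γ (fun γ => α • τ₁ γ + (1 - α) • τ₂ γ)) := by
  refine ⟨fun c hc => ⟨?_, ?_⟩, fun α h0 h1 => ⟨?_, ?_⟩⟩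
  · intro γ hγ γ' hγ'
    simp only [hc1 γ hγ γ' hγ', smul_add, mulVec_smul]
  · obtain ⟨x, hx⟩ := ha1
    refine ⟨c • x, ?_⟩
    rintro ⟨v, s⟩ ⟨γ, hγ, lam, hl0, hl1, hv, he, hs⟩
    have h := hx (v, mink (τ₁ γ) v / (1 - lam⁻¹)) ⟨γ, hγ, lam, hl0, hl1, hv, he, rfl⟩
    simp only [mink_smul_left, mul_div_assoc] at h hs ⊢
    rw [hs]
    exact mul_lt_mul_of_pos_left h hc
  · intro γ hγ γ' hγ'
    simp only [hc1 γ hγ γ' hγ', hc2 γ hγ γ' hγ', smul_add, mulVec_add, mulVec_smul]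
    abel
  · obtain ⟨x, hx⟩ := ha1
    obtain ⟨y, hy⟩ := ha2
    refine ⟨α • x + (1 - α) • y, ?_⟩
    rintro ⟨v, s⟩ ⟨γ, hγ, lam, hl0, hl1, hv, he, hs⟩
    have h := hx (v, mink (τ₁ γ) v / (1 - lam⁻¹)) ⟨γ, hγ, lam, hl0, hl1, hv, he, rfl⟩
    have h' := hy (v, mink (τ₂ γ) v / (1 - lam⁻¹)) ⟨γ, hγ, lam, hl0, hl1, hv, he, rfl⟩
    simp only [mink_add_left, mink_smul_left, add_div, mul_div_assoc] at h h' hs ⊢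
    rw [hs]
    -- strictness survives at the endpoints because one of `α`, `1 - α` is positive
    rcases h0.eq_or_lt with rfl | hα
    · simpa using h'
    · exact add_lt_add_of_lt_of_le (mul_lt_mul_of_pos_left h hα)
        (mul_le_mul_of_nonneg_left h'.le (sub_nonneg.2 h1))
end
end
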